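/- Positivity preservation of the 1D first-order HLL scheme (Theorem 3.1): Work in one space dimension (d = 1, ξ = 1, so ⟨1, F(U)⟩ = F₁(U)). Let Δx_j > 0 (j ∈ ℤ), Δt_n > 0 (n ∈ ℕ), and let (Ū_j^n)_{j∈ℤ, n∈ℕ} ⊂ ℝ⁸ satisfy Ū_j^{n+1} = Ū_j^n − (Δt_n/Δx_j)·[F̂(Ū_j^n, Ū_{j+1}^n; 1) − F̂(Ū_{j−1}^n, Ū_j^n; 1)], where F̂ is the HLL flux with interface wave speeds σ^{n,l}_{j+1/2} < σ^{n,r}_{j+1/2} and σ^{n,+}_{j+1/2} = max{σ^{n,r}_{j+1/2}, 0}, σ^{n,−}_{j+1/2} = min{σ^{n,l}_{j+1/2}, 0}. Assume: (i) Ū_j^0 ∈ 𝒢 and the fifth component (the first magnetic component B₁) of Ū_j^0 equals a constant B_c for all j; (ii) for every n ∈ ℕ and j ∈ ℤ such that Ū_j^n, Ū_{j+1}^n ∈ 𝒢, one has σ^{n,r}_{j+1/2} ≥ α_r(Ū_{j+1}^n, Ū_j^n; 1) and σ^{n,l}_{j+1/2} ≤ α_l(Ū_j^n, Ū_{j+1}^n;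 1); (iii) the CFL condition (σ^{n,+}_{j−1/2} − σ^{n,−}_{j+1/2})·Δt_n/Δx_j < 1 holds for all j and n. Then for every n ∈ ℕ and every j ∈ ℤ, Ū_j^n ∈ 𝒢 and its fifth component equals B_c. -/

import Mathlib

noncomputable section

open Finset

/-- An MHD state `U = (ρ, m, B, E)` viewed as a vector in `ℝ⁸`. -/
abbrev MHDState := Fin 8 → ℝ

namespace MHD

/-- Build a state from density, momentum, magnetic field, total energy. -/
def mk (ρ : ℝ) (m B : Fin 3 → ℝ) (E : ℝ) : MHDState :=
  ![ρ, m 0, m 1, m 2, B 0, B 1, B 2, E]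

/-- Density component. -/
def dens (U : MHDState) : ℝ := U 0

/-- Momentum components. -/
def mom (U : MHDState) : Fin 3 → ℝ := ![U 1, U 2, U 3]

/-- Magnetic field components. -/
def magB (U : MHDState) : Fin 3 → ℝ := ![U 4, U 5, U 6]

/-- Total energy component. -/
def toten (U : MHDState) : ℝ := U 7

/-- Euclidean dot product on `ℝ³`. -/
def dot3 (a b : Fin 3 → ℝ) : ℝ := ∑ k, a k * b k

/-- Squared Euclidean norm on `ℝ³`. -/
def sq3 (a : Fin 3 → ℝ) : ℝ := dot3 a a

/-- Euclidean norm on `ℝ³`. -/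
def norm3 (a : Fin 3 → ℝ) : ℝ := Real.sqrt (sq3 a)

/-- Velocity `v = m / ρ`. -/
def vel (U : MHDState) : Fin 3 → ℝ := fun k => mom U k / dens U

/-- Internal energy `𝓔(U) = E − (|m|²/ρ + |B|²)/2`. -/
def intE (U : MHDState) : ℝ := toten U - (sq3 (mom U) / dens U + sq3 (magB U)) / 2

/-- Specific internal energy `e = 𝓔(U)/ρ`. -/
def specE (U : MHDState) : ℝ := intE U / dens U

/-- The admissible state set `𝒢`. -/
def Gset : Set MHDState := {U | 0 < dens U ∧ 0 < intE U}

/-- The set `𝒢_ρ` of states with positive density. -/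
def Grho : Set MHDState := {U | 0 < dens U}

/-- Euclidean dot product on `ℝ⁸`. -/
def dot8 (U V : MHDState) : ℝ := ∑ i, U i * V i

/-- The vector `n* = (|v*|²/2, −v*, −B*, 1)`. -/
def nstar (vs Bs : Fin 3 → ℝ) : MHDState :=
  mk (sq3 vs / 2) (fun k => -vs k) (fun k => -Bs k) 1

/-- The set `𝒢*`. -/
def GstarSet : Set MHDState :=
  {U | 0 < dens U ∧ ∀ vs Bs : Fin 3 → ℝ, 0 < dot8 U (nstar vs Bs) + sq3 Bs / 2}

/-- Equation of state assumption: for `ρ > 0`, `e > 0 ↔ p(ρ,e) > 0`. -/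
def IsEOS (pfun : ℝ → ℝ → ℝ) : Prop :=
  ∀ ρ e : ℝ, 0 < ρ → (0 < e ↔ 0 < pfun ρ e)

/-- Pressure of a state, via the equation of state. -/
def pres (pfun : ℝ → ℝ → ℝ) (U : MHDState) : ℝ := pfun (dens U) (specE U)

/-- Total pressure `p + |B|²/2`. -/
def ptot (pfun : ℝ → ℝ → ℝ) (U : MHDState) : ℝ := pres pfun U + sq3 (magB U) / 2

/-- The `i`-th flux `F_i(U)`. -/
def flux (pfun : ℝ → ℝ → ℝ) (i : Fin 3) (U : MHDState) : MHDState :=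
  mk (dens U * vel U i)
    (fun k => dens U * vel U i * vel U k - magB U i * magB U k
      + ptot pfun U * (if k = i then 1 else 0))
    (fun k => vel U i * magB U k - magB U i * vel U k)
    (vel U i * (toten U + ptot pfun U) - magB U i * dot3 (vel U) (magB U))

/-- Directional inner product `⟨ξ, w⟩ = Σ_{k<d} ξ_k w_k` for `ξ ∈ ℝ^d`, `w ∈ ℝ³`, `d ≤ 3`. -/
def dirDot {d : ℕ} (hd : d ≤ 3) (ξ : Fin d → ℝ) (w : Fin 3 → ℝ) : ℝ :=
  ∑ k, ξ k * w (Fin.castLE hd k)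

/-- Directional flux `⟨ξ, F(U)⟩ = Σ_{i<d} ξ_i F_i(U)`. -/
def dirFlux (pfun : ℝ → ℝ → ℝ) {d : ℕ} (hd : d ≤ 3) (ξ : Fin d → ℝ) (U : MHDState) :
    MHDState :=
  ∑ i, ξ i • flux pfun (Fin.castLE hd i) U

/-- `ξ` is a unit vector. -/
def unitVec {d : ℕ} (ξ : Fin d → ℝ) : Prop := (∑ k, (ξ k) ^ 2) = 1

/-- `𝒞_s(U) = p / (ρ √(2e))`. -/
def soundC (pfun : ℝ → ℝ → ℝ) (U : MHDState) : ℝ :=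
  pres pfun U / (dens U * Real.sqrt (2 * specE U))

/-- `𝒞(U; ξ)`. -/
def waveC (pfun : ℝ → ℝ → ℝ) {d : ℕ} (hd : d ≤ 3) (ξ : Fin d → ℝ) (U : MHDState) : ℝ :=
  Real.sqrt ((soundC pfun U ^ 2 + sq3 (magB U) / dens U
    + Real.sqrt ((soundC pfun U ^ 2 + sq3 (magB U) / dens U) ^ 2
      - 4 * soundC pfun U ^ 2 * dirDot hd ξ (magB U) ^ 2 / dens U)) / 2)

/-- Roe-type averaged velocity `v̄ = (√ρ v + √ρ̃ ṽ)/(√ρ + √ρ̃)`. -/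
def roeV (U Ut : MHDState) : Fin 3 → ℝ := fun k =>
  (Real.sqrt (dens U) * vel U k + Real.sqrt (dens Ut) * vel Ut k)
    / (Real.sqrt (dens U) + Real.sqrt (dens Ut))

/-- `α_r(U, Ũ; ξ)`. -/
def alphaR (pfun : ℝ → ℝ → ℝ) {d : ℕ} (hd : d ≤ 3) (ξ : Fin d → ℝ) (U Ut : MHDState) : ℝ :=
  max (dirDot hd ξ (vel U)) (dirDot hd ξ (roeV U Ut)) + waveC pfun hd ξ U
    + norm3 (magB U - magB Ut) / (Real.sqrt (dens U) + Real.sqrt (dens Ut))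

/-- `α_l(U, Ũ; ξ)`. -/
def alphaL (pfun : ℝ → ℝ → ℝ) {d : ℕ} (hd : d ≤ 3) (ξ : Fin d → ℝ) (U Ut : MHDState) : ℝ :=
  min (dirDot hd ξ (vel U)) (dirDot hd ξ (roeV U Ut)) - waveC pfun hd ξ U
    - norm3 (magB U - magB Ut) / (Real.sqrt (dens U) + Real.sqrt (dens Ut))

/-- `α_⋆(U, Ũ; ξ)`. -/
def alphaS (pfun : ℝ → ℝ → ℝ) {d : ℕ} (hd : d ≤ 3) (ξ : Fin d → ℝ) (U Ut : MHDState) : ℝ :=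
  max (|dirDot hd ξ (vel U)|) (|dirDot hd ξ (roeV U Ut)|) + waveC pfun hd ξ U
    + norm3 (magB U - magB Ut) / (Real.sqrt (dens U) + Real.sqrt (dens Ut))

/-- The vector `θ(U, v*, B*) = 2^{−1/2}(B − B*, √ρ(v − v*), √(2ρe)) ∈ ℝ⁷`. -/
def theta (U : MHDState) (vs Bs : Fin 3 → ℝ) : Fin 7 → ℝ :=
  ![(magB U 0 - Bs 0) / Real.sqrt 2,
    (magB U 1 - Bs 1) / Real.sqrt 2,
    (magB U 2 - Bs 2) / Real.sqrt 2,
    Real.sqrt (dens U) * (vel U 0 - vs 0) / Real.sqrt 2,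
    Real.sqrt (dens U) * (vel U 1 - vs 1) / Real.sqrt 2,
    Real.sqrt (dens U) * (vel U 2 - vs 2) / Real.sqrt 2,
    Real.sqrt (2 * intE U) / Real.sqrt 2]

/-- `|θ|²`. -/
def thetaSq (U : MHDState) (vs Bs : Fin 3 → ℝ) : ℝ := ∑ k, theta U vs Bs k ^ 2

/-- Godunov–Powell source vector `S(U) = (0, B, v, v·B)`. -/
def source (U : MHDState) : MHDState := mk 0 (magB U) (vel U) (dot3 (vel U) (magB U))

/-- HLL numerical flux with clamped wave speeds `σm ≤ 0 ≤ σp`. -/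
def hllFlux (pfun : ℝ → ℝ → ℝ) {d : ℕ} (hd : d ≤ 3) (ξ : Fin d → ℝ)
    (Um Up : MHDState) (σm σp : ℝ) : MHDState :=
  (σp - σm)⁻¹ • (σp • dirFlux pfun hd ξ Um - σm • dirFlux pfun hd ξ Up
    + (σm * σp) • (Up - Um))

/-- HLL intermediate state `H(U⁻, U⁺; ξ)`. -/
def hllMid (pfun : ℝ → ℝ → ℝ) {d : ℕ} (hd : d ≤ 3) (ξ : Fin d → ℝ)
    (Um Up : MHDState) (σm σp : ℝ) : MHDState :=
  (σp - σm)⁻¹ • (σp • Up - dirFlux pfun hd ξ Up - σm • Um + dirFlux pfun hd ξ Um)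

/-- The quantity `α̂_j` of Theorem 2.3. -/
def alphaHat (pfun : ℝ → ℝ → ℝ) {d : ℕ} (hd : d ≤ 3) {N : ℕ}
    (s : Fin N → ℝ) (ξ : Fin N → Fin d → ℝ) (U : Fin N → MHDState) (j : Fin N) : ℝ :=
  max (dirDot hd (ξ j) (vel (U j)))
      ((∑ i, s i)⁻¹ * ∑ i, s i * dirDot hd (fun k => ξ j k - ξ i k) (roeV (U j) (U i)))
  + waveC pfun hd (ξ j) (U j)
  + 2 * (∑ i, s i)⁻¹ * ∑ i, s i *
      (norm3 (magB (U j) - magB (U i)) / (Real.sqrt (dens (U j)) + Real.sqrt (dens (U i))))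

def d1le3 : (1 : ℕ) ≤ 3 := by omega
def d2le3 : (2 : ℕ) ≤ 3 := by omega

/-- In one dimension the direction `ξ = 1`. -/
def xi1 : Fin 1 → ℝ := fun _ => 1

theorem dirFlux_xi1 (pfun : ℝ → ℝ → ℝ) (U : MHDState) :
    dirFlux pfun d1le3 xi1 U = flux pfun 0 U := by
  simp [dirFlux, xi1]

theorem dirDot_xi1 (w : Fin 3 → ℝ) : dirDot d1le3 xi1 w = w 0 := by
  simp [dirDot, xi1]

theorem sq3_eq (a : Fin 3 → ℝ) : sq3 a = a 0 ^ 2 + a 1 ^ 2 + a 2 ^ 2 := by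
  simp only [sq3, dot3, Fin.sum_univ_three]; ring

theorem sq3_nonneg (a : Fin 3 → ℝ) : 0 ≤ sq3 a := by
  rw [sq3_eq]; positivity

theorem norm3_sub_comm (a b : Fin 3 → ℝ) : norm3 (a - b) = norm3 (b - a) := by
  unfold norm3
  congr 1
  simp only [sq3_eq, Pi.sub_apply]
  ring

theorem roeV_comm (U V : MHDState) : roeV U V = roeV V U := by
  funext k
  simp only [roeV]
  congr 1 <;> ring

/-- The kinetic energy relative to the velocity `vs`, plus the internal energy. -/
def relKin (U : MHDState) (vs : Fin 3 → ℝ) : ℝ := dens U * sq3 (vel U - vs) / 2 + intE U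

/-- The magnetic energy relative to the field `Bs`. -/
def relMag (U : MHDState) (Bs : Fin 3 → ℝ) : ℝ := sq3 (magB U - Bs) / 2

/-- The quadratic coupling terms in `⟨F₁(U), n*⟩`. -/
def coupling (pfun : ℝ → ℝ → ℝ) (U : MHDState) (vs Bs : Fin 3 → ℝ) : ℝ :=
  pres pfun U * (vel U - vs) 0 + (vel U - vs) 0 * dot3 (magB U) (magB U - Bs)
    - magB U 0 * dot3 (vel U - vs) (magB U - Bs)

theorem dot8_nstar {U : MHDState} (hU : 0 < dens U) (vs Bs : Fin 3 → ℝ) :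
    dot8 U (nstar vs Bs) + sq3 Bs / 2 = relKin U vs + relMag U Bs := by
  have h : U 0 ≠ 0 := hU.ne'
  simp only [relKin, relMag, sq3_eq, Pi.sub_apply]
  simp [dot8, nstar, mk, intE, sq3_eq, vel, mom, dens, magB, toten, Fin.sum_univ_eight]
  field_simp
  ring

theorem dot8_flux_nstar (pfun : ℝ → ℝ → ℝ) {U : MHDState} (hU : 0 < dens U)
    (vs Bs : Fin 3 → ℝ) :
    dot8 (flux pfun 0 U) (nstar vs Bs) = vel U 0 * relKin U vs + vs 0 * relMag U Bs
      + coupling pfun U vs Bs - vs 0 * sq3 Bs / 2 + magB U 0 * dot3 vs Bs := by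
  have h : U 0 ≠ 0 := hU.ne'
  simp only [ptot, flux, coupling, relKin, relMag, sq3_eq, dot3, Fin.sum_univ_three, Pi.sub_apply]
  generalize pres pfun U = p
  simp [dot8, nstar, mk, intE, sq3_eq, vel, mom, dens, magB, toten, Fin.sum_univ_eight]
  field_simp
  ring

theorem dot8_add (U V n : MHDState) : dot8 (U + V) n = dot8 U n + dot8 V n := by
  simp [dot8, add_mul, Finset.sum_add_distrib]

theorem dot8_smul (c : ℝ) (U n : MHDState) : dot8 (c • U) n = c * dot8 U n := by
  simp [dot8, mul_assoc, Finset.mul_sum]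

theorem dot8_sub (U V n : MHDState) : dot8 (U - V) n = dot8 U n - dot8 V n := by
  simp [dot8, sub_mul, Finset.sum_sub_distrib]

theorem relKin_pos {U : MHDState} (hU : U ∈ Gset) (vs : Fin 3 → ℝ) : 0 < relKin U vs := by
  have h := sq3_nonneg (vel U - vs)
  have h1 := hU.1
  have h2 := hU.2
  unfold relKin
  positivity

theorem relMag_nonneg (U : MHDState) (Bs : Fin 3 → ℝ) : 0 ≤ relMag U Bs := by
  have h := sq3_nonneg (magB U - Bs)
  unfold relMag
  positivity

theorem Gset_subset_GstarSet : Gset ⊆ GstarSet := fun U hU =>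
  ⟨hU.1, fun vs Bs => by
    rw [dot8_nstar hU.1]
    exact add_pos_of_pos_of_nonneg (relKin_pos hU vs) (relMag_nonneg U Bs)⟩

theorem GstarSet_subset_Gset : GstarSet ⊆ Gset := fun U hU => ⟨hU.1, by
  have h := hU.2 (vel U) (magB U)
  rw [dot8_nstar hU.1] at h
  simpa [relKin, relMag, sq3_eq] using h⟩

/-- Bound of a bilinear form by its largest singular value, which is `√l` for the larger root `l`
of the characteristic polynomial. -/
theorem bilin_le {c h1 h2 h3 l : ℝ} (hA : c ^ 2 + h2 ^ 2 + h3 ^ 2 ≤ l) (hD : h1 ^ 2 ≤ l)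
    (hl : (l - (c ^ 2 + h2 ^ 2 + h3 ^ 2)) * (l - h1 ^ 2) = h1 ^ 2 * (h2 ^ 2 + h3 ^ 2))
    (y1 y2 y3 z b2 b3 : ℝ) :
    |y1 * (c * z + h2 * b2 + h3 * b3) - h1 * (y2 * b2 + y3 * b3)|
      ≤ √l * ((y1 ^ 2 + y2 ^ 2 + y3 ^ 2 + (z ^ 2 + b2 ^ 2 + b3 ^ 2)) / 2) := by
  have hl0 : 0 ≤ l := (sq_nonneg h1).trans hD
  have key : (c * y1) ^ 2 + (h2 * y1 - h1 * y2) ^ 2 + (h3 * y1 - h1 * y3) ^ 2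
      ≤ l * (y1 ^ 2 + y2 ^ 2 + y3 ^ 2) := by
    obtain ⟨A, hAe⟩ : ∃ A, A = l - (c ^ 2 + h2 ^ 2 + h3 ^ 2) := ⟨_, rfl⟩
    obtain ⟨D, hDe⟩ : ∃ D, D = l - h1 ^ 2 := ⟨_, rfl⟩
    have hA0 : 0 ≤ A := by linarith
    have hD0 : 0 ≤ D := by linarith
    rw [← hAe, ← hDe] at hl
    suffices h : 0 ≤ A * y1 ^ 2 + D * (y2 ^ 2 + y3 ^ 2) + 2 * h1 * y1 * (h2 * y2 + h3 * y3) by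
      rw [hAe, hDe] at h
      linarith
    rcases hA0.eq_or_lt with h0 | hpos
    · rw [← h0] at hl ⊢
      have e2 : h1 * h2 = 0 := by
        apply pow_eq_zero_iff (two_ne_zero) |>.1
        nlinarith [sq_nonneg (h1 * h2), sq_nonneg (h1 * h3)]
      have e3 : h1 * h3 = 0 := by
        apply pow_eq_zero_iff (two_ne_zero) |>.1
        nlinarith [sq_nonneg (h1 * h2), sq_nonneg (h1 * h3)]
      have : 2 * h1 * y1 * (h2 * y2 + h3 * y3)
          = 2 * y1 * (h1 * h2 * y2 + h1 * h3 * y3) := by ring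
      rw [this, e2, e3]
      have : 0 ≤ D * (y2 ^ 2 + y3 ^ 2) := by positivity
      linarith
    · refine nonneg_of_mul_nonneg_right (a := A) ?_ hpos
      have : A * (A * y1 ^ 2 + D * (y2 ^ 2 + y3 ^ 2) + 2 * h1 * y1 * (h2 * y2 + h3 * y3))
          = (A * y1 + h1 * (h2 * y2 + h3 * y3)) ^ 2 + (h1 * (h2 * y3 - h3 * y2)) ^ 2
            + (A * D - h1 ^ 2 * (h2 ^ 2 + h3 ^ 2)) * (y2 ^ 2 + y3 ^ 2) := by ring
      rw [this, hl]
      nlinarith [sq_nonneg (A * y1 + h1 * (h2 * y2 + h3 * y3)),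
        sq_nonneg (h1 * (h2 * y3 - h3 * y2))]
  have hX : 0 ≤ z ^ 2 + b2 ^ 2 + b3 ^ 2 := by positivity
  have hY : 0 ≤ y1 ^ 2 + y2 ^ 2 + y3 ^ 2 := by positivity
  refine abs_le_of_sq_le_sq ?_ (by positivity)
  have e : y1 * (c * z + h2 * b2 + h3 * b3) - h1 * (y2 * b2 + y3 * b3)
      = (c * y1) * z + (h2 * y1 - h1 * y2) * b2 + (h3 * y1 - h1 * y3) * b3 := by ring
  rw [e, mul_pow, Real.sq_sqrt hl0]
  generalize c * y1 = a1 at *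
  generalize h2 * y1 - h1 * y2 = a2 at *
  generalize h3 * y1 - h1 * y3 = a3 at *
  generalize y1 ^ 2 + y2 ^ 2 + y3 ^ 2 = Y at *
  have cs : (a1 * z + a2 * b2 + a3 * b3) ^ 2
      ≤ (a1 ^ 2 + a2 ^ 2 + a3 ^ 2) * (z ^ 2 + b2 ^ 2 + b3 ^ 2) := by
    nlinarith [sq_nonneg (a1 * b2 - a2 * z), sq_nonneg (a1 * b3 - a3 * z),
      sq_nonneg (a2 * b3 - a3 * b2)]
  generalize z ^ 2 + b2 ^ 2 + b3 ^ 2 = X at *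
  calc _ ≤ _ := cs
    _ ≤ l * Y * X := mul_le_mul_of_nonneg_right key hX
    _ ≤ l * ((Y + X) / 2) ^ 2 := by
      have : 0 ≤ l * ((Y - X) / 2) ^ 2 := by positivity
      nlinarith

theorem larger_root {a d g : ℝ} (hg : 0 ≤ g) {l : ℝ}
    (hl : l = (a + d + √((a + d) ^ 2 - 4 * (a * d - g))) / 2) :
    a ≤ l ∧ d ≤ l ∧ (l - a) * (l - d) = g := by
  have e : (a + d) ^ 2 - 4 * (a * d - g) = (a - d) ^ 2 + 4 * g := by ring
  rw [e] at hl
  have h0 : 0 ≤ (a - d) ^ 2 + 4 * g := by positivity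
  have hs := Real.sq_sqrt h0
  have hle : |a - d| ≤ √((a - d) ^ 2 + 4 * g) := Real.abs_le_sqrt (by linarith)
  rw [abs_le] at hle
  refine ⟨by linarith, by linarith, ?_⟩
  rw [hl]
  linear_combination hs / 4

theorem abs_coupling_le (pfun : ℝ → ℝ → ℝ) {U : MHDState} (hU : U ∈ Gset)
    (vs Bs : Fin 3 → ℝ) :
    |coupling pfun U vs Bs| ≤ waveC pfun d1le3 xi1 U * (relKin U vs + relMag U Bs) := by
  obtain ⟨hρ, hE⟩ := hU
  have he : 0 < specE U := div_pos hE hρ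
  have hs : 0 < √(dens U) := Real.sqrt_pos.2 hρ
  have ht : 0 < √(2 * specE U) := Real.sqrt_pos.2 (by positivity)
  have hs2 : √(dens U) ^ 2 = dens U := Real.sq_sqrt hρ.le
  have ht2 : √(2 * specE U) ^ 2 = 2 * specE U := Real.sq_sqrt (by positivity)
  have hEe : intE U = dens U * specE U := by unfold specE; field_simp
  have hp : pres pfun U = soundC pfun U * (dens U * √(2 * specE U)) := by
    unfold soundC; field_simp
  have hr := larger_root (a := soundC pfun U ^ 2 + (magB U 1 / √(dens U)) ^ 2
      + (magB U 2 / √(dens U)) ^ 2) (d := (magB U 0 / √(dens U)) ^ 2)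
    (g := (magB U 0 / √(dens U)) ^ 2 * ((magB U 1 / √(dens U)) ^ 2
      + (magB U 2 / √(dens U)) ^ 2)) (by positivity)
    (l := (soundC pfun U ^ 2 + sq3 (magB U) / dens U
      + √((soundC pfun U ^ 2 + sq3 (magB U) / dens U) ^ 2
        - 4 * soundC pfun U ^ 2 * dirDot d1le3 xi1 (magB U) ^ 2 / dens U)) / 2) (by
      rw [dirDot_xi1, sq3_eq]
      simp only [div_pow, hs2]
      congr 1
      congr 1
      · ring
      · congr 1
        ring)
  have hb := bilin_le hr.1 hr.2.1 hr.2.2 (√(dens U) * (vel U - vs) 0)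
    (√(dens U) * (vel U - vs) 1) (√(dens U) * (vel U - vs) 2)
    (√(dens U) * √(2 * specE U)) ((magB U - Bs) 1) ((magB U - Bs) 2)
  have hc : coupling pfun U vs Bs = √(dens U) * (vel U - vs) 0 *
      (soundC pfun U * (√(dens U) * √(2 * specE U)) + magB U 1 / √(dens U) * (magB U - Bs) 1
        + magB U 2 / √(dens U) * (magB U - Bs) 2)
      - magB U 0 / √(dens U) * (√(dens U) * (vel U - vs) 1 * (magB U - Bs) 1
        + √(dens U) * (vel U - vs) 2 * (magB U - Bs) 2) := by
    simp only [coupling, hp, dot3, Fin.sum_univ_three]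
    field_simp
    rw [hs2]
    ring
  rw [hc]
  refine hb.trans (mul_le_mul_of_nonneg_left ?_ (Real.sqrt_nonneg _))
  simp only [mul_pow, hs2, ht2, relKin, relMag, hEe, sq3_eq]
  nlinarith [sq_nonneg ((magB U - Bs) 0)]

theorem cauchy_schwarz_amgm {d1 d2 d3 N : ℝ} (hN : 0 ≤ N) (hN2 : N ^ 2 = d1 ^ 2 + d2 ^ 2 + d3 ^ 2)
    (u s1 s2 s3 : ℝ) :
    u * (d1 * s1 + d2 * s2 + d3 * s3) ≤ N * ((u ^ 2 + (s1 ^ 2 + s2 ^ 2 + s3 ^ 2)) / 2) := by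
  refine (abs_le.1 (abs_le_of_sq_le_sq ?_ (by positivity))).2
  have cs : (d1 * s1 + d2 * s2 + d3 * s3) ^ 2 ≤ N ^ 2 * (s1 ^ 2 + s2 ^ 2 + s3 ^ 2) := by
    rw [hN2]
    nlinarith [sq_nonneg (d1 * s2 - d2 * s1), sq_nonneg (d1 * s3 - d3 * s1),
      sq_nonneg (d2 * s3 - d3 * s2)]
  rw [mul_pow, mul_pow]
  generalize s1 ^ 2 + s2 ^ 2 + s3 ^ 2 = S at *
  have h1 := mul_le_mul_of_nonneg_left cs (sq_nonneg u)
  nlinarith [mul_nonneg (sq_nonneg N) (sq_nonneg (u ^ 2 - S))]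

/-- The magnetic energy jump advected with the velocity `vs`, relative to the Roe velocity. -/
theorem relMag_jump_le {U V : MHDState} (hU : U ∈ Gset) (hV : V ∈ Gset) (vs Bs : Fin 3 → ℝ) :
    (vs 0 - roeV U V 0) * (relMag U Bs - relMag V Bs)
      ≤ norm3 (magB U - magB V) / (√(dens U) + √(dens V))
        * (relKin U vs + relMag U Bs + (relKin V vs + relMag V Bs)) := by
  obtain ⟨hρ, hE⟩ := hU
  obtain ⟨hρ', hE'⟩ := hV
  have hs : 0 < √(dens U) := Real.sqrt_pos.2 hρ
  have hs2 : √(dens U) ^ 2 = dens U := Real.sq_sqrt hρ.le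
  have ht : 0 < √(dens V) := Real.sqrt_pos.2 hρ'
  have ht2 : √(dens V) ^ 2 = dens V := Real.sq_sqrt hρ'.le
  have hN : 0 ≤ norm3 (magB U - magB V) := Real.sqrt_nonneg _
  have hN2 : norm3 (magB U - magB V) ^ 2 = (magB U - magB V) 0 ^ 2
      + (magB U - magB V) 1 ^ 2 + (magB U - magB V) 2 ^ 2 := by
    rw [← sq3_eq]; exact Real.sq_sqrt (sq3_nonneg _)
  have h := cauchy_schwarz_amgm hN hN2
    (-(√(dens U) * (vel U 0 - vs 0) + √(dens V) * (vel V 0 - vs 0)))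
    (magB U 0 - Bs 0 + (magB V 0 - Bs 0)) (magB U 1 - Bs 1 + (magB V 1 - Bs 1))
    (magB U 2 - Bs 2 + (magB V 2 - Bs 2))
  have e : (vs 0 - roeV U V 0) * (relMag U Bs - relMag V Bs)
      = -(√(dens U) * (vel U 0 - vs 0) + √(dens V) * (vel V 0 - vs 0)) *
        ((magB U - magB V) 0 * (magB U 0 - Bs 0 + (magB V 0 - Bs 0))
        + (magB U - magB V) 1 * (magB U 1 - Bs 1 + (magB V 1 - Bs 1))
        + (magB U - magB V) 2 * (magB U 2 - Bs 2 + (magB V 2 - Bs 2))) / 2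
        / (√(dens U) + √(dens V)) := by
    simp only [roeV, relMag, sq3_eq, Pi.sub_apply]
    field_simp
    ring
  rw [e, div_mul_eq_mul_div]
  refine div_le_div_of_nonneg_right ?_ (by positivity)
  refine (div_le_div_of_nonneg_right h zero_le_two).trans ?_
  rw [mul_div_assoc]
  refine mul_le_mul_of_nonneg_left ?_ hN
  simp only [relKin, relMag, sq3_eq, Pi.sub_apply]
  generalize √(dens U) = s at *
  generalize √(dens V) = t at *
  rw [← hs2, ← ht2]
  linarith [sq_nonneg (s * (vel U 0 - vs 0) - t * (vel V 0 - vs 0)),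
    sq_nonneg (magB U 0 - Bs 0 - (magB V 0 - Bs 0)),
    sq_nonneg (magB U 1 - Bs 1 - (magB V 1 - Bs 1)),
    sq_nonneg (magB U 2 - Bs 2 - (magB V 2 - Bs 2)),
    sq_nonneg (s * (vel U 1 - vs 1)), sq_nonneg (t * (vel V 1 - vs 1)),
    sq_nonneg (s * (vel U 2 - vs 2)), sq_nonneg (t * (vel V 2 - vs 2))]

theorem waveC_nonneg (pfun : ℝ → ℝ → ℝ) (U : MHDState) : 0 ≤ waveC pfun d1le3 xi1 U :=
  Real.sqrt_nonneg _

theorem hllMid_dens_nonneg (pfun : ℝ → ℝ → ℝ) {Um Up : MHDState} (hm : Um ∈ Gset)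
    (hp : Up ∈ Gset) {a b : ℝ} (hab : a < b) (hb : alphaR pfun d1le3 xi1 Up Um ≤ b)
    (ha : a ≤ alphaL pfun d1le3 xi1 Um Up) :
    0 ≤ dens (hllMid pfun d1le3 xi1 Um Up a b) := by
  have h1 := waveC_nonneg pfun Um
  have h2 := waveC_nonneg pfun Up
  have n1 : 0 ≤ norm3 (magB Up - magB Um) / (√(dens Up) + √(dens Um)) :=
    div_nonneg (Real.sqrt_nonneg _) (by positivity)
  have n2 : 0 ≤ norm3 (magB Um - magB Up) / (√(dens Um) + √(dens Up)) :=
    div_nonneg (Real.sqrt_nonneg _) (by positivity)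
  simp only [alphaR, alphaL, dirDot_xi1] at hb ha
  have m1 := le_max_left (vel Up 0) (roeV Up Um 0)
  have m2 := min_le_left (vel Um 0) (roeV Um Up 0)
  have e : dens (hllMid pfun d1le3 xi1 Um Up a b)
      = (b - a)⁻¹ * (dens Up * (b - vel Up 0) + dens Um * (vel Um 0 - a)) := by
    simp only [hllMid, dens, dirFlux_xi1, Pi.add_apply, Pi.sub_apply, Pi.smul_apply, smul_eq_mul]
    simp only [flux, mk, dens, Matrix.cons_val]
    ring
  rw [e]
  have := hm.1
  have := hp.1
  refine mul_nonneg (inv_nonneg.2 (by linarith)) (add_nonneg ?_ ?_) <;>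
    exact mul_nonneg (by linarith) (by linarith)

theorem hllMid_energy_nonneg (pfun : ℝ → ℝ → ℝ) {Um Up : MHDState} (hm : Um ∈ Gset)
    (hp : Up ∈ Gset) (hB : Um 4 = Up 4) {a b : ℝ} (hab : a < b)
    (hb : alphaR pfun d1le3 xi1 Up Um ≤ b) (ha : a ≤ alphaL pfun d1le3 xi1 Um Up)
    (vs Bs : Fin 3 → ℝ) :
    0 ≤ dot8 (hllMid pfun d1le3 xi1 Um Up a b) (nstar vs Bs) + sq3 Bs / 2 := by
  have hd : 0 < b - a := sub_pos.2 hab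
  have jump := relMag_jump_le hp hm vs Bs
  have cp := (abs_le.1 (abs_coupling_le pfun hp vs Bs)).2
  have cm := (abs_le.1 (abs_coupling_le pfun hm vs Bs)).1
  simp only [alphaR, alphaL, dirDot_xi1] at hb ha
  rw [roeV_comm Um Up, norm3_sub_comm, add_comm (√(dens Um))] at ha
  set β := norm3 (magB Up - magB Um) / (√(dens Up) + √(dens Um))
  have m1 := le_max_left (vel Up 0) (roeV Up Um 0)
  have m2 := min_le_left (vel Um 0) (roeV Up Um 0)
  have m3 := le_max_right (vel Up 0) (roeV Up Um 0)
  have m4 := min_le_right (vel Um 0) (roeV Up Um 0)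
  have e : dot8 (hllMid pfun d1le3 xi1 Um Up a b) (nstar vs Bs) + sq3 Bs / 2
      = (b - a)⁻¹ * (b * (relKin Up vs + relMag Up Bs) - a * (relKin Um vs + relMag Um Bs)
        - (vel Up 0 * relKin Up vs + vs 0 * relMag Up Bs + coupling pfun Up vs Bs)
        + (vel Um 0 * relKin Um vs + vs 0 * relMag Um Bs + coupling pfun Um vs Bs)) := by
    rw [← dot8_nstar hp.1, ← dot8_nstar hm.1]
    simp only [hllMid, dot8_smul, dot8_add, dot8_sub, dirFlux_xi1, dot8_flux_nstar pfun hp.1,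
      dot8_flux_nstar pfun hm.1]
    have hB' : magB Um 0 = magB Up 0 := hB
    rw [hB']
    field_simp
    ring
  rw [e]
  refine mul_nonneg (inv_nonneg.2 hd.le) ?_
  have k1 := mul_nonneg (sub_nonneg.2 (show vel Up 0 + waveC pfun d1le3 xi1 Up + β ≤ b by linarith))
    (relKin_pos hp vs).le
  have k2 := mul_nonneg (sub_nonneg.2 (show roeV Up Um 0 + waveC pfun d1le3 xi1 Up + β ≤ b by
    linarith)) (relMag_nonneg Up Bs)
  have k3 := mul_nonneg (sub_nonneg.2 (show a ≤ vel Um 0 - waveC pfun d1le3 xi1 Um - β by linarith))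
    (relKin_pos hm vs).le
  have k4 := mul_nonneg (sub_nonneg.2 (show a ≤ roeV Up Um 0 - waveC pfun d1le3 xi1 Um - β by
    linarith)) (relMag_nonneg Um Bs)
  linarith

theorem hllMid_apply_four (pfun : ℝ → ℝ → ℝ) {Um Up : MHDState} {c : ℝ} (hm : Um 4 = c)
    (hp : Up 4 = c) {a b : ℝ} (hab : a < b) : hllMid pfun d1le3 xi1 Um Up a b 4 = c := by
  have hd : b - a ≠ 0 := (sub_pos.2 hab).ne'
  simp only [hllMid, dirFlux_xi1, Pi.add_apply, Pi.sub_apply, Pi.smul_apply, smul_eq_mul, hm,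
    hp]
  simp only [flux, mk, Matrix.cons_val]
  field_simp
  ring

/-- One step of the HLL scheme is a combination of the old state and two intermediate states. -/
theorem hll_update (pfun : ℝ → ℝ → ℝ) (Ul U Ur : MHDState) {a b a' b' : ℝ} (hab : a < b)
    (hab' : a' < b') (r : ℝ) :
    U - r • (hllFlux pfun d1le3 xi1 U Ur a' b' - hllFlux pfun d1le3 xi1 Ul U a b)
      = (1 - r * (b - a')) • U + (r * -a') • hllMid pfun d1le3 xi1 U Ur a' b'
        + (r * b) • hllMid pfun d1le3 xi1 Ul U a b := by
  have hd : b - a ≠ 0 := (sub_pos.2 hab).ne'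
  have hd' : b' - a' ≠ 0 := (sub_pos.2 hab').ne'
  funext i
  simp only [hllFlux, hllMid, Pi.add_apply, Pi.sub_apply, Pi.smul_apply, smul_eq_mul]
  field_simp
  ring

theorem add_smul_mem_Gset {U H K : MHDState} (hU : U ∈ Gset) (hH : 0 ≤ dens H)
    (hK : 0 ≤ dens K)
    (hH' : ∀ vs Bs : Fin 3 → ℝ, 0 ≤ dot8 H (nstar vs Bs) + sq3 Bs / 2)
    (hK' : ∀ vs Bs : Fin 3 → ℝ, 0 ≤ dot8 K (nstar vs Bs) + sq3 Bs / 2)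
    {x y z : ℝ} (hx : 0 < x) (hy : 0 ≤ y) (hz : 0 ≤ z) (hs : x + y + z = 1) :
    x • U + y • H + z • K ∈ Gset := by
  refine GstarSet_subset_Gset ⟨?_, fun vs Bs => ?_⟩
  · have := hU.1
    have e : dens (x • U + y • H + z • K) = x * dens U + y * dens H + z * dens K := rfl
    rw [e]
    positivity
  · have h := (Gset_subset_GstarSet hU).2 vs Bs
    have hH := hH' vs Bs
    have hK := hK' vs Bs
    simp only [dot8_add, dot8_smul]
    have e : x * dot8 U (nstar vs Bs) + y * dot8 H (nstar vs Bs) + z * dot8 K (nstar vs Bs)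
        + sq3 Bs / 2 = x * (dot8 U (nstar vs Bs) + sq3 Bs / 2)
        + y * (dot8 H (nstar vs Bs) + sq3 Bs / 2) + z * (dot8 K (nstar vs Bs) + sq3 Bs / 2) := by
      linear_combination (-(sq3 Bs / 2)) * hs
    rw [e]
    positivity

theorem min_zero_lt_max_zero {a b : ℝ} (h : a < b) : min a 0 < max b 0 := by
  rcases lt_or_ge a 0 with h0 | h0
  · exact (min_le_left _ _).trans_lt (h0.trans_le (le_max_right _ _))
  · exact (min_le_right _ _).trans_lt ((h0.trans_lt h).trans_le (le_max_left _ _))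

/-- Theorem 3.1: positivity preservation of the 1D first-order HLL scheme. -/
theorem oneD_first_order_scheme_PP (pfun : ℝ → ℝ → ℝ) (hEOS : IsEOS pfun)
    (Δx : ℤ → ℝ) (hΔx : ∀ j, 0 < Δx j)
    (Δt : ℕ → ℝ) (hΔt : ∀ n, 0 < Δt n)
    (Ubar : ℕ → ℤ → MHDState)
    (σl σr : ℕ → ℤ → ℝ) (hσ : ∀ n j, σl n j < σr n j)
    (Bc : ℝ)
    (hinit : ∀ j, Ubar 0 j ∈ Gset ∧ Ubar 0 j 4 = Bc)
    (hspeed : ∀ n j, Ubar n j ∈ Gset → Ubar n (j + 1) ∈ Gset →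
      alphaR pfun d1le3 xi1 (Ubar n (j + 1)) (Ubar n j) ≤ σr n j ∧
        σl n j ≤ alphaL pfun d1le3 xi1 (Ubar n j) (Ubar n (j + 1)))
    (hCFL : ∀ n j, (max (σr n (j - 1)) 0 - min (σl n j) 0) * Δt n / Δx j < 1)
    (hscheme : ∀ n j, Ubar (n + 1) j =
      Ubar n j - (Δt n / Δx j) •
        (hllFlux pfun d1le3 xi1 (Ubar n j) (Ubar n (j + 1))
            (min (σl n j) 0) (max (σr n j) 0)
          - hllFlux pfun d1le3 xi1 (Ubar n (j - 1)) (Ubar n j)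
              (min (σl n (j - 1)) 0) (max (σr n (j - 1)) 0))) :
    ∀ n j, Ubar n j ∈ Gset ∧ Ubar n j 4 = Bc := by
  intro n
  induction n with
  | zero => exact hinit
  | succ n ih =>
    intro j
    have hl := hspeed n (j - 1) (ih _).1 (ih _).1
    have hr := hspeed n j (ih _).1 (ih _).1
    have hdl := min_zero_lt_max_zero (hσ n (j - 1))
    have hdr := min_zero_lt_max_zero (hσ n j)
    simp only [sub_add_cancel] at hl
    have hbl := hl.1.trans (le_max_left _ 0)
    have hbr := hr.1.trans (le_max_left _ 0)
    have hal := (min_le_left _ 0).trans hl.2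
    have har := (min_le_left _ 0).trans hr.2
    have hcfl := hCFL n j
    rw [mul_div_assoc, mul_comm] at hcfl
    have hrat : 0 < Δt n / Δx j := div_pos (hΔt n) (hΔx j)
    rw [hscheme n j, hll_update pfun _ _ _ hdl hdr]
    refine ⟨add_smul_mem_Gset (ih j).1
      (hllMid_dens_nonneg pfun (ih _).1 (ih _).1 hdr hbr har)
      (hllMid_dens_nonneg pfun (ih _).1 (ih _).1 hdl hbl hal)
      (hllMid_energy_nonneg pfun (ih _).1 (ih _).1 ((ih _).2.trans (ih _).2.symm) hdr hbr har)
      (hllMid_energy_nonneg pfun (ih _).1 (ih _).1 ((ih _).2.trans (ih _).2.symm) hdl hbl hal)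
      (by linarith) (mul_nonneg hrat.le (neg_nonneg.2 (min_le_right _ _)))
      (mul_nonneg hrat.le (le_max_right _ _)) (by ring), ?_⟩
    simp only [Pi.add_apply, Pi.smul_apply, smul_eq_mul, (ih j).2,
      hllMid_apply_four pfun (ih j).2 (ih (j + 1)).2 hdr,
      hllMid_apply_four pfun (ih (j - 1)).2 (ih j).2 hdl]
    ring
end MHD
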